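/- Let γ > 1, A0 > 0 and 0 < r0 < r1. Suppose ρ, U1, U2 : [r0, r1] → ℝ are differentiable with ρ(r) > 0 and U1(r) ≠ 0 for all r, and that (ρ, U1, U2) satisfies the radially symmetric steady Euler system on [r0, r1]. Set κ1 = r1 ρ(r1) U1(r1), κ2 = r1 U2(r1) and B0 = ½(U1(r1)² + U2(r1)²) + γ A0 ρ(r1)^{γ−1}/(γ−1). If r̄ ∈ [r0, r1] is a sonic point, i.e. M1(r̄)² + M2(r̄)² = 1, then ρ(r̄) = (2(γ−1)B0 / ((γ+1) γ A0))^{1/(γ−1)} and r̄² = (γ+1)(κ1² + κ2² ρ(r̄)²) / (2(γ−1) B0 ρ(r̄)²). -/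

import Mathlib

open Real Set

/-!
The mass flux `r ρ U₁`, the circulation `r U₂` and the Bernoulli function are first integrals of the
system. At a sonic point the squared speed is `c² = γ A₀ ρ ^ (γ - 1)`, so the Bernoulli
constant alone fixes the density. Multiplying `U₁² + U₂² = c²` by `r² ρ²` expresses its left side
through the mass flux and the circulation, and the Bernoulli relation eliminates `c²`.
-/

theorem eq_of_hasDerivWithinAt_zero {E : Type*} [NormedAddCommGroup E] [NormedSpace ℝ E]
    {f : ℝ → E} {s : Set ℝ} (hs : Convex ℝ s) (hf : ∀ x ∈ s, HasDerivWithinAt f 0 s x)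
    {x y : ℝ} (hx : x ∈ s) (hy : y ∈ s) : f x = f y := by
  have hbound : ‖f x - f y‖ ≤ 0 * ‖x - y‖ :=
    hs.norm_image_sub_le_of_norm_hasDerivWithin_le hf (fun _ _ => norm_zero.le) hy hx
  rwa [zero_mul, norm_le_zero_iff, sub_eq_zero] at hbound

/-- The sound speed of a polytropic gas with pressure `A₀ * ρ ^ γ`, as a function of the value `ρ`
of the density. -/
noncomputable def soundSpeed (γ A₀ ρ : ℝ) : ℝ :=
  √(A₀ * γ) * ρ ^ ((γ - 1) / 2)

/-- The Bernoulli function of a polytropic gas, kinetic energy plus enthalpy, as a function of the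
values of the density and of the radial and angular velocities. The enthalpy term is a division by
`γ - 1`, so it is meaningful only for `γ ≠ 1`. -/
noncomputable def bernoulliFunction (γ A₀ ρ u₁ u₂ : ℝ) : ℝ :=
  (u₁ ^ 2 + u₂ ^ 2) / 2 + γ * A₀ * ρ ^ (γ - 1) / (γ - 1)

/-- The radially symmetric steady isentropic Euler system on a set `s` of radii, for the density
`ρ` and the radial and angular velocities `U₁`, `U₂`. The derivatives along `s` are carried as the
functions `ρ'`, `U₁'`, `U₂'`, and the pressure gradient is written out by the chain rule. -/
structure IsRadialEulerFlow (γ A₀ : ℝ) (s : Set ℝ) (ρ U₁ U₂ ρ' U₁' U₂' : ℝ → ℝ) : Prop where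
  radius_pos : ∀ r ∈ s, 0 < r
  hasDeriv_density : ∀ r ∈ s, HasDerivWithinAt ρ (ρ' r) s r
  hasDeriv_radial : ∀ r ∈ s, HasDerivWithinAt U₁ (U₁' r) s r
  hasDeriv_angular : ∀ r ∈ s, HasDerivWithinAt U₂ (U₂' r) s r
  mass_conservation : ∀ r ∈ s, ρ' r * U₁ r + ρ r * U₁' r + ρ r * U₁ r / r = 0
  radial_momentum : ∀ r ∈ s,
    U₁ r * U₁' r + (1 / ρ r) * (A₀ * γ * ρ r ^ (γ - 1) * ρ' r) - U₂ r ^ 2 / r = 0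
  angular_momentum : ∀ r ∈ s, U₁ r * U₂' r + U₁ r * U₂ r / r = 0

namespace IsRadialEulerFlow

variable {γ A₀ : ℝ} {s : Set ℝ} {ρ U₁ U₂ ρ' U₁' U₂' : ℝ → ℝ} {a r : ℝ}

theorem massFlux_eq (flow : IsRadialEulerFlow γ A₀ s ρ U₁ U₂ ρ' U₁' U₂') (hs : Convex ℝ s)
    (ha : a ∈ s) (hr : r ∈ s) : a * ρ a * U₁ a = r * ρ r * U₁ r := by
  refine eq_of_hasDerivWithinAt_zero (f := fun x => x * ρ x * U₁ x) hs (fun x hx => ?_) ha hr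
  have hx0 : x ≠ 0 := (flow.radius_pos x hx).ne'
  have hmass := flow.mass_conservation x hx
  field_simp at hmass
  refine (((hasDerivWithinAt_id x s).mul (flow.hasDeriv_density x hx)).mul
    (flow.hasDeriv_radial x hx)).congr_deriv ?_
  simp only [id, Pi.mul_apply]
  linear_combination hmass

theorem deriv_angular_eq (flow : IsRadialEulerFlow γ A₀ s ρ U₁ U₂ ρ' U₁' U₂') (hr : r ∈ s)
    (hU₁ : U₁ r ≠ 0) : U₂' r = -(U₂ r / r) := by
  have hprod : U₁ r * (U₂' r + U₂ r / r) = 0 := by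
    linear_combination flow.angular_momentum r hr
  exact eq_neg_of_add_eq_zero_left ((mul_eq_zero.1 hprod).resolve_left hU₁)

theorem circulation_eq (flow : IsRadialEulerFlow γ A₀ s ρ U₁ U₂ ρ' U₁' U₂') (hs : Convex ℝ s)
    (hU₁ : ∀ x ∈ s, U₁ x ≠ 0) (ha : a ∈ s) (hr : r ∈ s) : a * U₂ a = r * U₂ r := by
  refine eq_of_hasDerivWithinAt_zero (f := fun x => x * U₂ x) hs (fun x hx => ?_) ha hr
  have hx0 : x ≠ 0 := (flow.radius_pos x hx).ne'
  refine ((hasDerivWithinAt_id x s).mul (flow.hasDeriv_angular x hx)).congr_deriv ?_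
  rw [flow.deriv_angular_eq hx (hU₁ x hx), id, mul_neg, mul_div_cancel₀ _ hx0, one_mul,
    add_neg_cancel]

theorem bernoulliFunction_eq (flow : IsRadialEulerFlow γ A₀ s ρ U₁ U₂ ρ' U₁' U₂') (hs : Convex ℝ s)
    (hγ : γ ≠ 1) (hρ : ∀ x ∈ s, ρ x ≠ 0) (hU₁ : ∀ x ∈ s, U₁ x ≠ 0) (ha : a ∈ s) (hr : r ∈ s) :
    bernoulliFunction γ A₀ (ρ a) (U₁ a) (U₂ a) = bernoulliFunction γ A₀ (ρ r) (U₁ r) (U₂ r) := by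
  refine eq_of_hasDerivWithinAt_zero
    (f := fun x => bernoulliFunction γ A₀ (ρ x) (U₁ x) (U₂ x)) hs (fun x hx => ?_) ha hr
  have hkinetic : HasDerivWithinAt (fun x => (U₁ x ^ 2 + U₂ x ^ 2) / 2)
      (U₁ x * U₁' x + U₂ x * U₂' x) s x := by
    refine ((((flow.hasDeriv_radial x hx).pow 2).add
      ((flow.hasDeriv_angular x hx).pow 2)).div_const 2).congr_deriv ?_
    push_cast
    ring
  have henthalpy : HasDerivWithinAt (fun x => γ * A₀ * ρ x ^ (γ - 1) / (γ - 1))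
      ((1 / ρ x) * (A₀ * γ * ρ x ^ (γ - 1) * ρ' x)) s x := by
    refine ((((flow.hasDeriv_density x hx).rpow_const (p := γ - 1)
      (Or.inl (hρ x hx))).const_mul (γ * A₀)).div_const (γ - 1)).congr_deriv ?_
    have hγ' : γ - 1 ≠ 0 := sub_ne_zero.2 hγ
    rw [rpow_sub_one (hρ x hx)]
    field_simp
  refine (hkinetic.add henthalpy).congr_deriv ?_
  rw [flow.deriv_angular_eq hx (hU₁ x hx)]
  linear_combination flow.radial_momentum x hx

end IsRadialEulerFlow

section SonicState

variable {γ A₀ ρ u₁ u₂ : ℝ}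

theorem soundSpeed_sq (hA : 0 ≤ A₀ * γ) (hρ : 0 ≤ ρ) :
    soundSpeed γ A₀ ρ ^ 2 = A₀ * γ * ρ ^ (γ - 1) := by
  rw [soundSpeed, mul_pow, sq_sqrt hA, ← rpow_mul_natCast hρ, Nat.cast_ofNat,
    div_mul_cancel₀ _ two_ne_zero]

theorem speed_sq_of_mach_sq_eq_one (hA : 0 ≤ A₀ * γ) (hρ : 0 ≤ ρ)
    (hsonic : (u₁ / soundSpeed γ A₀ ρ) ^ 2 + (u₂ / soundSpeed γ A₀ ρ) ^ 2 = 1) :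
    u₁ ^ 2 + u₂ ^ 2 = A₀ * γ * ρ ^ (γ - 1) := by
  rw [div_pow, div_pow, ← add_div, soundSpeed_sq hA hρ] at hsonic
  exact eq_of_div_eq_one hsonic

theorem bernoulliFunction_of_speed_sq (hγ : γ ≠ 1)
    (hspeed : u₁ ^ 2 + u₂ ^ 2 = A₀ * γ * ρ ^ (γ - 1)) :
    2 * (γ - 1) * bernoulliFunction γ A₀ ρ u₁ u₂ = (γ + 1) * γ * A₀ * ρ ^ (γ - 1) := by
  have hγ' : γ - 1 ≠ 0 := sub_ne_zero.2 hγ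
  rw [bernoulliFunction, hspeed]
  field_simp
  ring

end SonicState

theorem eq_div_rpow_of_eq_mul_rpow {x k b p : ℝ} (hx : 0 ≤ x) (hk : k ≠ 0) (hp : p ≠ 0)
    (h : b = k * x ^ p) : x = (b / k) ^ (1 / p) := by
  rw [h, mul_div_cancel_left₀ _ hk, one_div, rpow_rpow_inv hx hp]

theorem sonic_point_location_general {γ A₀ : ℝ} {s : Set ℝ} {ρ U₁ U₂ ρ' U₁' U₂' : ℝ → ℝ}
    {a r : ℝ} (hγ : γ ≠ 1) (hγ' : γ ≠ -1) (hA : 0 < A₀ * γ) (hs : Convex ℝ s)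
    (flow : IsRadialEulerFlow γ A₀ s ρ U₁ U₂ ρ' U₁' U₂')
    (hρ : ∀ x ∈ s, 0 < ρ x) (hU₁ : ∀ x ∈ s, U₁ x ≠ 0) (ha : a ∈ s) (hr : r ∈ s)
    (hsonic : (U₁ r / soundSpeed γ A₀ (ρ r)) ^ 2 + (U₂ r / soundSpeed γ A₀ (ρ r)) ^ 2 = 1) :
    ρ r = (2 * (γ - 1) * bernoulliFunction γ A₀ (ρ a) (U₁ a) (U₂ a) / ((γ + 1) * γ * A₀)) ^
      (1 / (γ - 1)) ∧
    r ^ 2 = (γ + 1) * ((a * ρ a * U₁ a) ^ 2 + (a * U₂ a) ^ 2 * ρ r ^ 2) /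
      (2 * (γ - 1) * bernoulliFunction γ A₀ (ρ a) (U₁ a) (U₂ a) * ρ r ^ 2) := by
  have hρr : 0 < ρ r := hρ r hr
  have hspeed := speed_sq_of_mach_sq_eq_one hA.le hρr.le hsonic
  have hbernoulli := bernoulliFunction_of_speed_sq hγ hspeed
  rw [← flow.bernoulliFunction_eq hs hγ (fun x hx => (hρ x hx).ne') hU₁ ha hr] at hbernoulli
  have hcoeff : (γ + 1) * γ * A₀ ≠ 0 := by
    rw [mul_assoc, mul_comm γ]
    exact mul_ne_zero (by rwa [← sub_neg_eq_add, sub_ne_zero]) hA.ne'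
  refine ⟨eq_div_rpow_of_eq_mul_rpow hρr.le hcoeff (sub_ne_zero.2 hγ) hbernoulli, ?_⟩
  have hdenom : (γ + 1) * γ * A₀ * ρ r ^ (γ - 1) * ρ r ^ 2 ≠ 0 :=
    mul_ne_zero (mul_ne_zero hcoeff (rpow_pos_of_pos hρr _).ne') (pow_ne_zero 2 hρr.ne')
  rw [flow.massFlux_eq hs ha hr, flow.circulation_eq hs hU₁ ha hr, hbernoulli, eq_div_iff hdenom]
  linear_combination (-(γ + 1) * r ^ 2 * ρ r ^ 2) * hspeed

/-- At any sonic point `r̄` of a radially symmetric steady Euler flow,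
the density equals the critical density `ρ_c` and `r̄²` is given by the stated formula in
terms of the mass flux `κ1`, the circulation `κ2` and the Bernoulli constant `B0`. -/
theorem sonic_point_location
    (γ A0 r0 r1 : ℝ) (hγ : 1 < γ) (hA0 : 0 < A0) (hr0 : 0 < r0) (hr01 : r0 < r1)
    (ρ U1 U2 ρ' U1' U2' : ℝ → ℝ)
    (hρ : ∀ r ∈ Icc r0 r1, HasDerivWithinAt ρ (ρ' r) (Icc r0 r1) r)
    (hU1 : ∀ r ∈ Icc r0 r1, HasDerivWithinAt U1 (U1' r) (Icc r0 r1) r)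
    (hU2 : ∀ r ∈ Icc r0 r1, HasDerivWithinAt U2 (U2' r) (Icc r0 r1) r)
    (hρpos : ∀ r ∈ Icc r0 r1, 0 < ρ r)
    (hU1ne : ∀ r ∈ Icc r0 r1, U1 r ≠ 0)
    (heq1 : ∀ r ∈ Icc r0 r1, ρ' r * U1 r + ρ r * U1' r + ρ r * U1 r / r = 0)
    (heq2 : ∀ r ∈ Icc r0 r1,
      U1 r * U1' r + (1 / ρ r) * (A0 * γ * ρ r ^ (γ - 1) * ρ' r) - (U2 r) ^ 2 / r = 0)
    (heq3 : ∀ r ∈ Icc r0 r1, U1 r * U2' r + U1 r * U2 r / r = 0)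
    (c M1 M2 : ℝ → ℝ)
    (hc : ∀ r, c r = Real.sqrt (A0 * γ) * ρ r ^ ((γ - 1) / 2))
    (hM1 : ∀ r, M1 r = U1 r / c r) (hM2 : ∀ r, M2 r = U2 r / c r)
    (κ1 κ2 B0 : ℝ)
    (hκ1 : κ1 = r1 * ρ r1 * U1 r1) (hκ2 : κ2 = r1 * U2 r1)
    (hB0 : B0 = ((U1 r1) ^ 2 + (U2 r1) ^ 2) / 2 + γ * A0 * ρ r1 ^ (γ - 1) / (γ - 1))
    (rb : ℝ) (hrb : rb ∈ Icc r0 r1)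
    (hsonic : (M1 rb) ^ 2 + (M2 rb) ^ 2 = 1) :
    ρ rb = (2 * (γ - 1) * B0 / ((γ + 1) * γ * A0)) ^ ((1 : ℝ) / (γ - 1)) ∧
    rb ^ 2 = (γ + 1) * (κ1 ^ 2 + κ2 ^ 2 * (ρ rb) ^ 2)
      / (2 * (γ - 1) * B0 * (ρ rb) ^ 2) := by
  subst hκ1 hκ2 hB0
  rw [hM1, hM2, hc] at hsonic
  exact sonic_point_location_general hγ.ne' (by linarith) (by positivity) (convex_Icc r0 r1)
    ⟨fun r hr => hr0.trans_le hr.1, hρ, hU1, hU2, heq1, heq2, heq3⟩ hρpos hU1ne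
    (right_mem_Icc.2 hr01.le) hrb hsonic
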